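/- arXiv:2202.09306 — 2 statements merged into one kernel-verified Lean document; each statement's English description precedes it below -/
import Mathlib

section
/- Let N ≥ 1 and 0 ≤ n ≤ N. Let V(ℂ) ⊆ ℂ^N be the common zero locus of a set of polynomials with real coefficients, and assume V(ℂ) is irreducible for the Zariski topology (V(ℂ) is nonempty, and whenever V(ℂ) is contained in the union of two Zariski-closed sets, it is contained in one of them). Set V(ℝ) = V(ℂ) ∩ ℝ^N. Suppose x₀ ∈ V(ℝ) is a smooth point of V(ℂ) in the following sense: there exist a Euclidean-open neighborhood W of x₀ in ℂ^N and a polynomial map F: ℂ^N → ℂ^{N−n} with real coefficients such that V(ℂ) ∩ W = F⁻¹(0) ∩ W and the Jacobian matrix of F at x₀ has rank N−n. Let H be a subset of V(ℝ), open in the Euclidean (Hausdorff) topology of V(ℝ) inherited from ℝ^N, with x₀ ∈ H. Then H is Zariski-dense in V(ℝ): every polynomial P ∈ ℝ[x₁,…,x_N] vanishing at every point of H vanishes at every point of V(ℝ). -/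
open MvPolynomial

/-!
By the inverse function theorem, carried out equivariantly for complex conjugation, the zero set of
`F` is near the real point `x₀` the image of a holomorphic retraction commuting with conjugation.
Pulling `P` back along it gives a holomorphic function that vanishes at the real points near `x₀`,
hence identically near `x₀` by the identity theorem. So `P` vanishes on a Euclidean neighbourhood
of `x₀` in `V(ℂ)`.

Let `I` be the prime ideal of `V(ℂ)`, and choose a Noether normalization `ℂ[y] ⊆ ℂ[x] ⧸ I`. The
corresponding projection `V(ℂ) → ℂ^s` is open for the Euclidean topology, by properness and
continuity of the roots of monic polynomials. If `P ∉ I`, then some nonzero `r ∈ ℂ[y]` is a multiple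
of `P` modulo `I`, and `r` would vanish on a nonempty open subset of `ℂ^s`.
-/

open scoped Topology

section Lifting

variable {R A K : Type*} [CommRing R] [CommRing A] [Field K] [IsAlgClosed K]

theorem exists_ringHom_comp_eq_of_isIntegral {f : R →+* A} (hf : f.IsIntegral) (ψ : R →+* K)
    (hker : RingHom.ker f ≤ RingHom.ker ψ) : ∃ χ : A →+* K, χ.comp f = ψ := by
  algebraize [f]
  have := RingHom.ker_isPrime ψ
  obtain ⟨Q, -, hQprime, hQ⟩ := Ideal.exists_ideal_over_prime_of_isIntegral (RingHom.ker ψ)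
    (⊥ : Ideal A) hker
  have : Q.LiesOver (RingHom.ker ψ) := ⟨hQ.symm⟩
  let _ : Algebra (R ⧸ RingHom.ker ψ) K := ψ.kerLift.toAlgebra
  have : Module.IsTorsionFree (R ⧸ RingHom.ker ψ) K :=
    Module.isTorsionFree_iff_algebraMap_injective.2 ψ.kerLift_injective
  have : IsDomain (A ⧸ Q) := Ideal.Quotient.isDomain Q
  have : IsDomain (R ⧸ RingHom.ker ψ) := Ideal.Quotient.isDomain _
  have : Module.IsTorsionFree (R ⧸ RingHom.ker ψ) (A ⧸ Q) :=
    Module.isTorsionFree_iff_faithfulSMul.2 (Ideal.Quotient.instFaithfulSMul Q _)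
  let χ : (A ⧸ Q) →ₐ[R ⧸ RingHom.ker ψ] K := IsAlgClosed.lift
  refine ⟨χ.toRingHom.comp (Ideal.Quotient.mk Q), RingHom.ext fun r => ?_⟩
  exact χ.commutes (Ideal.Quotient.mk _ r)

theorem exists_ringHom_comp_eq_and_apply_eq_of_eval₂_minpoly_eq_zero [IsDomain R]
    [IsIntegrallyClosed R] [IsDomain A] [Algebra R A] [FaithfulSMul R A] [Algebra.IsIntegral R A]
    {α : A} {ψ : R →+* K} {t : K} (ht : (minpoly R α).eval₂ ψ t = 0) :
    ∃ χ : A →+* K, χ.comp (algebraMap R A) = ψ ∧ χ α = t := by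
  let φ : Polynomial R →+* A := (Polynomial.aeval α : Polynomial R →ₐ[R] A)
  have hφ : φ.comp Polynomial.C = algebraMap R A := RingHom.ext (Polynomial.aeval_C α)
  have hφint : φ.IsIntegral :=
    RingHom.IsIntegral.tower_top Polynomial.C φ (hφ ▸ algebraMap_isIntegral_iff.2 ‹_›)
  have hker : RingHom.ker φ ≤ RingHom.ker (Polynomial.eval₂RingHom ψ t) := fun p hp => by
    obtain ⟨q, rfl⟩ := (minpoly.isIntegrallyClosed_dvd_iff (Algebra.IsIntegral.isIntegral α) p).1 hp
    simp only [RingHom.mem_ker, map_mul, Polynomial.coe_eval₂RingHom, ht, zero_mul]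
  obtain ⟨χ, hχ⟩ := exists_ringHom_comp_eq_of_isIntegral hφint _ hker
  refine ⟨χ, ?_, ?_⟩
  · rw [← hφ, ← RingHom.comp_assoc, hχ]
    ext; simp
  · simpa [φ] using congr($hχ Polynomial.X)

end Lifting

/-- The polynomial map `A^σ → A^τ` whose components `G` have coefficients in `R`. Separating `R`
from `A` covers both projections defined over `ℂ` and real equations evaluated at complex points. -/
noncomputable def polynomialMap {σ τ R A : Type*} [CommSemiring R] [CommSemiring A] [Algebra R A]
    (G : τ → MvPolynomial σ R) (z : σ → A) : τ → A :=
  fun i => aeval z (G i)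

/-- The polynomials `G` exhibit the coordinate ring `k[σ] ⧸ I` as an integral extension of the
polynomial ring `k[τ]`, as in Noether normalization. Geometrically, `polynomialMap G` restricts
to a finite surjective map from the zero locus of `I` onto `k^τ`. -/
structure IsNoetherProjection {σ τ k : Type*} [CommRing k] (I : Ideal (MvPolynomial σ k))
    (G : τ → MvPolynomial σ k) : Prop where
  injective : Function.Injective ((Ideal.Quotient.mkₐ k I).comp (aeval G))
  isIntegral : ((Ideal.Quotient.mkₐ k I).comp (aeval G)).IsIntegral

theorem exists_isNoetherProjection {σ k : Type*} [Finite σ] [Field k]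
    {I : Ideal (MvPolynomial σ k)} (hI : I ≠ ⊤) :
    ∃ (s : ℕ) (G : Fin s → MvPolynomial σ k), IsNoetherProjection I G := by
  have := Ideal.Quotient.nontrivial_iff.2 hI
  obtain ⟨s, g, hinj, hint⟩ := exists_integral_inj_algHom_of_fg k (MvPolynomial σ k ⧸ I)
  choose G hG using fun i => Ideal.Quotient.mk_surjective (I := I) (g (X i))
  have hg : (Ideal.Quotient.mkₐ k I).comp (aeval G) = g := by
    ext i
    simp [hG]
  exact ⟨s, G, hg ▸ hinj, hg ▸ hint⟩

theorem eval_polynomialMap {σ τ k : Type*} [CommSemiring k] (G : τ → MvPolynomial σ k)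
    (z : σ → k) (r : MvPolynomial τ k) : eval (polynomialMap G z) r = eval z (aeval G r) := by
  rw [← aeval_eq_eval, ← aeval_eq_eval]
  exact congr($((comp_aeval (f := G) (aeval z)).symm) r)

theorem exists_mem_zeroLocus_forall_apply_mk_eq_eval {σ k : Type*} [Field k]
    {I : Ideal (MvPolynomial σ k)} (χ : MvPolynomial σ k ⧸ I →+* k)
    (hχ : ∀ a, χ (Ideal.Quotient.mk I (C a)) = a) :
    ∃ z ∈ zeroLocus k I, ∀ f, χ (Ideal.Quotient.mk I f) = eval z f := by
  have heval : χ.comp (Ideal.Quotient.mk I) = eval fun i => χ (Ideal.Quotient.mk I (X i)) := by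
    ext i
    · simpa using hχ i
    · simp
  refine ⟨fun i => χ (Ideal.Quotient.mk I (X i)), fun f hf => ?_, fun f => congr($heval f)⟩
  rw [aeval_eq_eval, ← heval, RingHom.comp_apply, Ideal.Quotient.eq_zero_iff_mem.2 hf, map_zero]

namespace IsNoetherProjection

section Field

variable {σ τ k : Type*} [Field k] {I : Ideal (MvPolynomial σ k)} {G : τ → MvPolynomial σ k}
  [I.IsPrime]

theorem exists_ne_zero_aeval_sub_mul_mem (hG : IsNoetherProjection I G)
    {f : MvPolynomial σ k} (hf : f ∉ I) :
    ∃ r : MvPolynomial τ k, r ≠ 0 ∧ ∃ b, aeval G r - f * b ∈ I := by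
  let g : MvPolynomial τ k →+* MvPolynomial σ k ⧸ I := ((Ideal.Quotient.mkₐ k I).comp (aeval G))
  have hf0 : Ideal.Quotient.mk I f ≠ 0 := fun h => hf (Ideal.Quotient.eq_zero_iff_mem.1 h)
  have hbot : (Ideal.span {Ideal.Quotient.mk I f}).comap g ≠ ⊥ := by
    algebraize [g]
    exact Ideal.comap_ne_bot_of_integral_mem hf0 (Ideal.mem_span_singleton_self _)
      (hG.isIntegral _)
  obtain ⟨r, hr, hr0⟩ := Submodule.exists_mem_ne_zero_of_ne_bot hbot
  obtain ⟨b', hb'⟩ := Ideal.mem_span_singleton.1 (Ideal.mem_comap.1 hr)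
  obtain ⟨b, rfl⟩ := Ideal.Quotient.mk_surjective b'
  refine ⟨r, hr0, b, Ideal.Quotient.eq.1 ?_⟩
  rw [map_mul]
  exact hb'

theorem exists_monic_eval_eq_zero_iff [IsAlgClosed k] (hG : IsNoetherProjection I G)
    (f : MvPolynomial σ k) :
    ∃ p : Polynomial (MvPolynomial τ k), p.Monic ∧ ∀ c t, (p.map (eval c)).eval t = 0 ↔
      ∃ z ∈ zeroLocus k I, polynomialMap G z = c ∧ eval z f = t := by
  let _ : Algebra (MvPolynomial τ k) (MvPolynomial σ k ⧸ I) :=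
    ((Ideal.Quotient.mkₐ k I).comp (aeval G)).toAlgebra
  have hmap (r) : algebraMap (MvPolynomial τ k) (MvPolynomial σ k ⧸ I) r =
    Ideal.Quotient.mk I (aeval G r) := rfl
  have : FaithfulSMul (MvPolynomial τ k) (MvPolynomial σ k ⧸ I) :=
    (faithfulSMul_iff_algebraMap_injective _ _).2 hG.injective
  have : Algebra.IsIntegral (MvPolynomial τ k) (MvPolynomial σ k ⧸ I) := ⟨hG.isIntegral⟩
  let α := Ideal.Quotient.mk I f
  refine ⟨minpoly _ α, minpoly.monic (Algebra.IsIntegral.isIntegral α), fun c t => ?_⟩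
  refine ⟨fun h => ?_, ?_⟩
  · rw [Polynomial.eval_map] at h
    obtain ⟨χ, hχ, hχα⟩ := exists_ringHom_comp_eq_and_apply_eq_of_eval₂_minpoly_eq_zero h
    have hconst (a : k) : χ (Ideal.Quotient.mk I (C a)) = a := by
      simpa [hmap] using congr($hχ (C a))
    obtain ⟨z, hz, hzχ⟩ := exists_mem_zeroLocus_forall_apply_mk_eq_eval χ hconst
    refine ⟨z, hz, funext fun i => ?_, (hzχ f).symm.trans hχα⟩
    have hχi := congr($hχ (X i))
    rwa [RingHom.comp_apply, hmap, aeval_X, hzχ, eval_X, ← aeval_eq_eval] at hχi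
  · rintro ⟨z, hz, rfl, rfl⟩
    let ev : MvPolynomial σ k ⧸ I →+* k := Ideal.Quotient.lift I (eval z) fun a ha => hz a ha
    have hev : ev.comp (algebraMap (MvPolynomial τ k) _) = eval (polynomialMap G z) :=
      RingHom.ext fun r => (eval_polynomialMap G z r).symm
    rw [Polynomial.eval_map, ← hev, show eval z f = ev α from rfl, ← Polynomial.hom_eval₂,
      ← Polynomial.aeval_def, minpoly.aeval, map_zero]

theorem finite_fiber [IsAlgClosed k] [Finite σ] (hG : IsNoetherProjection I G) (c : τ → k) :
    {z ∈ zeroLocus k I | polynomialMap G z = c}.Finite := by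
  choose p hp hroot using fun i : σ => hG.exists_monic_eval_eq_zero_iff (X i)
  have hfin (i : σ) : {t : k | ((p i).map (eval c)).IsRoot t}.Finite :=
    Polynomial.finite_setOfPred_isRoot ((hp i).map _).ne_zero
  refine (Set.Finite.pi hfin).subset ?_
  rintro z ⟨hz, hzc⟩ i -
  exact (hroot i c (z i)).2 ⟨z, hz, hzc, eval_X i⟩

end Field

end IsNoetherProjection

section Roots

open Polynomial in
theorem exists_isRoot_norm_sub_lt {k : Type*} [NormedField k] {q : k[X]} (hq : q.Monic)
    (hsplits : q.Splits) {a : k} {ε : ℝ} (hε : 0 ≤ ε) (ha : ‖q.eval a‖ < ε ^ q.natDegree) :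
    ∃ b, q.IsRoot b ∧ ‖a - b‖ < ε := by
  by_contra! hfar
  refine ha.not_ge ?_
  calc ε ^ q.natDegree = (q.roots.map fun _ => ε).prod := by
        rw [Multiset.map_const', Multiset.prod_replicate, hsplits.natDegree_eq_card_roots]
    _ ≤ (q.roots.map fun b => ‖a - b‖).prod :=
        Multiset.prod_map_le_prod_map₀ _ _ (fun _ _ => hε) fun b hb =>
          hfar b (isRoot_of_mem_roots hb)
    _ = ‖q.eval a‖ := by
        rw [hsplits.eval_eq_prod_roots_of_monic hq]
        simpa [Function.comp_def] using
          (map_multiset_prod (normHom (α := k)) (q.roots.map fun b => a - b)).symm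

variable {τ k : Type*} [NormedField k] {p : Polynomial (MvPolynomial τ k)}

theorem continuous_eval_map_eval (p : Polynomial (MvPolynomial τ k)) (t : k) :
    Continuous fun c : τ → k => (p.map (eval c)).eval t := by
  have heq (c : τ → k) : (p.map (eval c)).eval t = eval c (p.eval (C t)) := by
    simpa using Polynomial.eval_map_apply (f := eval c) (p := p) (x := C t)
  simpa only [heq] using continuous_eval (p.eval (C t))

theorem eventually_exists_eval_map_eval_eq_zero [IsAlgClosed k] (hp : p.Monic) {c₀ : τ → k}
    {t₀ : k} (h₀ : (p.map (eval c₀)).eval t₀ = 0) {S : Set k} (hS : S ∈ 𝓝 t₀) :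
    ∀ᶠ c in 𝓝 c₀, ∃ t ∈ S, (p.map (eval c)).eval t = 0 := by
  obtain ⟨ε, hε, hball⟩ := Metric.mem_nhds_iff.1 hS
  have hsmall : ∀ᶠ c in 𝓝 c₀, ‖(p.map (eval c)).eval t₀‖ < ε ^ p.natDegree := by
    refine (continuous_eval_map_eval p t₀).norm.continuousAt.eventually_lt_const ?_
    simpa only [h₀, norm_zero] using pow_pos hε _
  filter_upwards [hsmall] with c hc
  obtain ⟨t, ht, htε⟩ := exists_isRoot_norm_sub_lt (hp.map (eval c)) (IsAlgClosed.splits _) hε.le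
    (hp.natDegree_map (eval c) ▸ hc)
  exact ⟨t, hball (by rwa [mem_ball_iff_norm']), ht⟩

theorem continuous_cauchyBound_map_eval (hp : p.Monic) :
    Continuous fun c : τ → k => (p.map (eval c)).cauchyBound := by
  simp only [Polynomial.cauchyBound, hp.natDegree_map, (hp.map _).leadingCoeff, nnnorm_one,
    div_one, Polynomial.coeff_map]
  exact (Continuous.finset_sup_apply fun i _ => (continuous_eval _).nnnorm).add continuous_const

theorem exists_norm_le_of_eval_map_eval_eq_zero (hp : p.Monic) {K : Set (τ → k)}
    (hK : IsCompact K) :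
    ∃ M : ℝ, ∀ c ∈ K, ∀ t, (p.map (eval c)).eval t = 0 → ‖t‖ ≤ M := by
  obtain ⟨M, hM⟩ := hK.bddAbove_image (continuous_cauchyBound_map_eval hp).continuousOn
  refine ⟨M, fun c hc t ht => ?_⟩
  have hroot := Polynomial.IsRoot.norm_lt_cauchyBound (hp.map (eval c)).ne_zero ht
  exact_mod_cast hroot.le.trans (hM ⟨c, hc, rfl⟩)

end Roots

theorem exists_eval_eq_zero_and_forall_eval_ne_zero {σ k : Type*} [Field k] {E : Set (σ → k)}
    (hE : E.Finite) (x : σ → k) :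
    ∃ a : MvPolynomial σ k, eval x a = 0 ∧ ∀ z ∈ E, z ≠ x → eval z a ≠ 0 := by
  classical
  have hpair (z : σ → k) (hz : z ≠ x) : ∃ b : MvPolynomial σ k, eval x b = 1 ∧ eval z b = 0 := by
    obtain ⟨i, hi⟩ := Function.ne_iff.1 hz
    refine ⟨C (x i - z i)⁻¹ * (X i - C (z i)), ?_, ?_⟩
    · simp [sub_ne_zero.2 hi.symm]
    · simp
  choose! b hbx hbz using hpair
  refine ⟨1 - ∏ z ∈ hE.toFinset.erase x, b z, ?_, fun z hzE hzx => ?_⟩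
  · rw [map_sub, map_one, map_prod,
      Finset.prod_eq_one fun z hz => hbx z (Finset.ne_of_mem_erase hz), sub_self]
  · have hz : z ∈ hE.toFinset.erase x := by simp [hzE, hzx]
    rw [map_sub, map_one, map_prod, Finset.prod_eq_zero hz (hbz z hzx), sub_zero]
    exact one_ne_zero

theorem continuous_polynomialMap {σ τ R A : Type*} [CommSemiring R] [CommSemiring A]
    [Algebra R A] [TopologicalSpace A] [IsTopologicalSemiring A] (G : τ → MvPolynomial σ R) :
    Continuous (polynomialMap G : (σ → A) → τ → A) :=
  continuous_pi fun i => by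
    simpa only [polynomialMap, aeval_def, eval₂_eq_eval_map] using
      MvPolynomial.continuous_eval (map (algebraMap R A) (G i))

theorem isClosed_zeroLocus {σ k : Type*} [Field k] [TopologicalSpace k] [T1Space k]
    [IsTopologicalSemiring k] (I : Ideal (MvPolynomial σ k)) : IsClosed (zeroLocus k I) := by
  have hZ : zeroLocus k I = ⋂ f ∈ I, (fun z => eval z f) ⁻¹' {0} := by
    ext z
    simp [mem_zeroLocus_iff]
  rw [hZ]
  exact isClosed_biInter fun f _ => isClosed_singleton.preimage (continuous_eval f)

theorem eq_zero_of_eventually_eval_eq_zero {σ k : Type*} [Finite σ] [NontriviallyNormedField k]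
    {r : MvPolynomial σ k} {c : σ → k} (hr : ∀ᶠ z in 𝓝 c, eval z r = 0) : r = 0 := by
  have := Fintype.ofFinite σ
  obtain ⟨ε, hε, hball⟩ := Metric.eventually_nhds_iff_ball.1 hr
  refine funext_set (fun i => Metric.ball (c i) ε)
    (fun i => infinite_of_mem_nhds (c i) (Metric.ball_mem_nhds _ hε)) fun z hz => ?_
  rw [map_zero]
  exact hball z (by rwa [ball_pi c hε])

namespace IsNoetherProjection

variable {σ τ k : Type*} [NontriviallyNormedField k] [IsAlgClosed k]
  {I : Ideal (MvPolynomial σ k)} [I.IsPrime] {G : τ → MvPolynomial σ k}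

theorem isProperMap [ProperSpace k] [Finite σ] [Finite τ] (hG : IsNoetherProjection I G) :
    IsProperMap fun z : zeroLocus k I => polynomialMap G z.1 := by
  rw [isProperMap_iff_isCompact_preimage]
  refine ⟨(continuous_polynomialMap G).comp continuous_subtype_val, fun K hK => ?_⟩
  choose p hp hroot using fun i : σ => hG.exists_monic_eval_eq_zero_iff (X i)
  choose M hM using fun i => exists_norm_le_of_eval_map_eval_eq_zero (hp i) hK
  rw [Subtype.isCompact_iff]
  refine (isCompact_univ_pi fun i => isCompact_closedBall (0 : k) (M i)).of_isClosed_subset ?_ ?_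
  · exact (isClosed_zeroLocus I).isClosedMap_subtype_val _
      (hK.isClosed.preimage ((continuous_polynomialMap G).comp continuous_subtype_val))
  · rintro _ ⟨z, hz, rfl⟩ i -
    rw [mem_closedBall_zero_iff]
    exact hM i _ hz _ ((hroot i _ _).2 ⟨z, z.2, rfl, eval_X i⟩)

theorem isOpenMap [ProperSpace k] [Finite σ] [Finite τ] (hG : IsNoetherProjection I G) :
    IsOpenMap fun z : zeroLocus k I => polynomialMap G z.1 := by
  refine isOpenMap_iff_nhds_le.2 fun x => Filter.le_map fun U hU => ?_
  -- The fibre through `x` may contain other points, so a polynomial `a` separating `x` from them is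
  -- adjoined: its value moves continuously as a root of its minimal polynomial, and properness of
  -- `(polynomialMap G, a)` keeps the lifted point near `x`.
  obtain ⟨a, hax, hane⟩ := exists_eval_eq_zero_and_forall_eval_ne_zero
    (hG.finite_fiber (polynomialMap G x.1)) x
  obtain ⟨p, hp, hroot⟩ := hG.exists_monic_eval_eq_zero_iff a
  let θ : zeroLocus k I → (τ → k) × k := fun z => (polynomialMap G z.1, eval z.1 a)
  have hθ : IsProperMap θ :=
    isProperMap_of_comp_of_t2 (((continuous_polynomialMap G).comp continuous_subtype_val).prodMk
      ((continuous_eval a).comp continuous_subtype_val)) continuous_fst hG.isProperMap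
  have hfiber : ∀ z ∈ θ ⁻¹' {(polynomialMap G x.1, 0)}, z = x := by
    intro z hz
    obtain ⟨hzG, hza⟩ := Prod.mk.inj hz
    by_contra hzx
    exact hane z ⟨z.2, hzG⟩ (Subtype.coe_injective.ne hzx) hza
  have hnear : ∀ᶠ y in 𝓝 (polynomialMap G x.1, 0), ∀ z ∈ θ ⁻¹' {y}, z ∈ U :=
    hθ.isClosedMap.eventually_nhds_fiber _ fun z hz => hfiber z hz ▸ hU
  obtain ⟨A, hA, S, hS, hAS⟩ := mem_nhds_prod_iff.1 hnear
  have hp0 := (hroot (polynomialMap G x.1) 0).2 ⟨x, x.2, rfl, hax⟩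
  filter_upwards [hA, eventually_exists_eval_map_eval_eq_zero hp hp0 hS] with c hc ⟨t, ht, htp⟩
  obtain ⟨z, hz, rfl, rfl⟩ := (hroot c t).1 htp
  exact ⟨⟨z, hz⟩, hAS (Set.mk_mem_prod hc ht) ⟨z, hz⟩ rfl, rfl⟩

end IsNoetherProjection

theorem mem_of_eventually_mem_zeroLocus_imp_eval_eq_zero {σ k : Type*} [Finite σ]
    [NontriviallyNormedField k] [IsAlgClosed k] [ProperSpace k] {I : Ideal (MvPolynomial σ k)}
    [hI : I.IsPrime] {x : σ → k} (hx : x ∈ zeroLocus k I) {Q : MvPolynomial σ k}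
    (hQ : ∀ᶠ z in 𝓝 x, z ∈ zeroLocus k I → eval z Q = 0) : Q ∈ I := by
  by_contra hQI
  obtain ⟨s, G, hG⟩ := exists_isNoetherProjection hI.ne_top
  obtain ⟨r, hr0, b, hb⟩ := hG.exists_ne_zero_aeval_sub_mul_mem hQI
  have hQ' : ∀ᶠ z : zeroLocus k I in 𝓝 ⟨x, hx⟩, eval z.1 Q = 0 :=
    (continuous_subtype_val.continuousAt.eventually hQ).mono fun z hz => hz z.2
  have hr : ∀ᶠ z : zeroLocus k I in 𝓝 ⟨x, hx⟩, eval (polynomialMap G z) r = 0 := by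
    filter_upwards [hQ'] with z hz
    have hbz : eval z.1 (aeval G r - Q * b) = 0 := z.2 _ hb
    rwa [map_sub, map_mul, hz, zero_mul, sub_zero, ← eval_polynomialMap] at hbz
  exact hr0 (eq_zero_of_eventually_eval_eq_zero (hG.isOpenMap.nhds_le ⟨x, hx⟩ hr))

section IdentityTheorem

variable {E G : Type*} [NormedAddCommGroup E] [NormedSpace ℂ E] [StarAddMonoid E] [StarModule ℂ E]
  [NormedStarGroup E] [NormedAddCommGroup G] [NormedSpace ℂ G] [CompleteSpace G]

theorem eqOn_zero_of_forall_ofReal_eq_zero {g : ℂ → G} {r : ℝ}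
    (hg : DifferentiableOn ℂ g (Metric.ball 0 r))
    (h0 : ∀ t : ℝ, (t : ℂ) ∈ Metric.ball 0 r → g t = 0) : Set.EqOn g 0 (Metric.ball 0 r) := by
  rcases le_or_gt r 0 with hr | hr
  · simp [Metric.ball_eq_empty.2 hr]
  have htendsto : Filter.Tendsto ((↑) : ℝ → ℂ) (𝓝[≠] 0) (𝓝[≠] 0) :=
    Complex.continuous_ofReal.continuousWithinAt.tendsto_nhdsWithin fun t ht => by simpa using ht
  refine (hg.analyticOnNhd Metric.isOpen_ball).eqOn_zero_of_preconnected_of_frequently_eq_zero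
    (convex_ball 0 r).isPreconnected (Metric.mem_ball_self hr) (htendsto.frequently ?_)
  refine Filter.Eventually.frequently (nhdsWithin_le_nhds ?_)
  filter_upwards [Metric.ball_mem_nhds 0 hr] with t ht
  exact h0 t (by simpa using ht)

theorem eventually_eq_zero_of_eventually_isSelfAdjoint_imp {h : E → G} {x : E}
    (hx : IsSelfAdjoint x) (hd : ∀ᶠ w in 𝓝 x, DifferentiableAt ℂ h w)
    (h0 : ∀ᶠ w in 𝓝 x, IsSelfAdjoint w → h w = 0) : ∀ᶠ w in 𝓝 x, h w = 0 := by
  obtain ⟨r, hr, hball⟩ := Metric.eventually_nhds_iff_ball.1 (hd.and h0)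
  filter_upwards [Metric.ball_mem_nhds x (show 0 < r / 3 by positivity)] with w hw
  rw [mem_ball_iff_norm] at hw
  let u : E := realPart (w - x)
  let v : E := imaginaryPart (w - x)
  have hu : ‖u‖ < r / 3 := (realPart.norm_le (w - x)).trans_lt hw
  have hv : ‖v‖ < r / 3 := (imaginaryPart.norm_le (w - x)).trans_lt hw
  -- `w` lies on the complexification of a line of self-adjoint points.
  let line : ℂ → E := fun t => x + u + t • v
  have hline : ∀ t ∈ Metric.ball (0 : ℂ) 2, line t ∈ Metric.ball x r := fun t ht => by
    rw [mem_ball_zero_iff] at ht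
    rw [mem_ball_iff_norm]
    calc ‖line t - x‖ = ‖u + t • v‖ := by simp only [line, add_assoc, add_sub_cancel_left]
      _ ≤ ‖u‖ + ‖t‖ * ‖v‖ := (norm_add_le _ _).trans_eq (by rw [norm_smul])
      _ ≤ ‖u‖ + 2 * ‖v‖ := by gcongr
      _ < r := by linarith
  have hline_star (t : ℝ) : IsSelfAdjoint (line t) :=
    (hx.add (realPart (w - x)).2).add (.smul (Complex.conj_ofReal t) (imaginaryPart (w - x)).2)
  have hdiff : DifferentiableOn ℂ (h ∘ line) (Metric.ball 0 2) := fun t ht =>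
    ((hball _ (hline t ht)).1.comp t (by fun_prop)).differentiableWithinAt
  have hzero : h (line Complex.I) = 0 :=
    eqOn_zero_of_forall_ofReal_eq_zero hdiff
      (fun t ht => (hball _ (hline t ht)).2 (hline_star t)) (by simp)
  have hline_I : line Complex.I = w := by
    simp only [line, u, v, add_assoc, realPart_add_I_smul_imaginaryPart, add_sub_cancel]
  rwa [hline_I] at hzero

end IdentityTheorem

section StarEquivariant

variable {𝕜 E F : Type*} [RCLike 𝕜]
  [NormedAddCommGroup E] [NormedSpace 𝕜 E] [StarAddMonoid E] [StarModule 𝕜 E] [ContinuousStar E]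
  [NormedAddCommGroup F] [NormedSpace 𝕜 F] [StarAddMonoid F] [StarModule 𝕜 F] [ContinuousStar F]

theorem map_star_of_hasFDerivAt {f : E → F} (hf : ∀ z, f (star z) = star (f z)) {x : E}
    (hx : IsSelfAdjoint x) {J : E →L[𝕜] F} (hJ : HasFDerivAt f J x) (v : E) :
    J (star v) = star (J v) := by
  have hJ' := HasFDerivAt.star_star hJ
  have hf' : star ∘ f ∘ star = f := funext fun z => by simp [hf]
  rw [hf', hx.star_eq] at hJ'
  simpa using congr($(hJ.unique hJ') (star v))

theorem exists_rightInverse_map_star [FiniteDimensional 𝕜 F] {J : E →L[𝕜] F}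
    (hJ : Function.Surjective J) (hJstar : ∀ v, J (star v) = star (J v)) :
    ∃ B : F →L[𝕜] E, (∀ v, J (B v) = v) ∧ ∀ v, B (star v) = star (B v) := by
  obtain ⟨B, hB⟩ := J.exists_rightInverse_of_surjective (LinearMap.range_eq_top.2 hJ)
  have hJB (v : F) : J (B v) = v := congr($hB v)
  let B' : F →L[𝕜] E := (starL 𝕜).toContinuousLinearMap.comp
    (B.comp (starL 𝕜).toContinuousLinearMap)
  have hB' (v : F) : B' v = star (B (star v)) := rfl
  refine ⟨(2⁻¹ : 𝕜) • (B + B'), fun v => ?_, fun v => ?_⟩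
  · simp [hB', hJB, hJstar, ← add_smul, ← two_mul]
  · simp [hB', add_comm]

variable {f : E → F} {x : E} {J : E →L[𝕜] F}

theorem exists_openPartialHomeomorph_map_eq [CompleteSpace E] [FiniteDimensional 𝕜 F]
    (hf : ContDiffAt 𝕜 1 f x) (hfstar : ∀ z, f (star z) = star (f z)) (hx : IsSelfAdjoint x)
    (hfx : f x = 0) (hJ : HasFDerivAt f J x) (hJsurj : Function.Surjective J) :
    ∃ e : OpenPartialHomeomorph E E, x ∈ e.source ∧ e x = 0 ∧
      ContDiffAt 𝕜 1 e x ∧ ContDiffAt 𝕜 1 e.symm 0 ∧ (∀ z, J (e z) = f z) ∧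
      ∀ z, e (star z) = star (e z) := by
  have hJstar := map_star_of_hasFDerivAt hfstar hx hJ
  obtain ⟨B, hJB, hBstar⟩ := exists_rightInverse_map_star hJsurj hJstar
  -- In the chart `Φ`, whose derivative at `x` is the identity, `f` becomes the linear map `J`.
  let Φ : E → E := fun z => B (f z) + ((z - x) - B (J (z - x)))
  have hΦx : Φ x = 0 := by simp [Φ, hfx]
  have hΦ : ContDiffAt 𝕜 1 Φ x := by fun_prop
  have hΦ' : HasFDerivAt Φ (ContinuousLinearEquiv.refl 𝕜 E : E →L[𝕜] E) x := by
    have hsub : HasFDerivAt (fun z => z - x) (.id 𝕜 E) x := (hasFDerivAt_id x).sub_const x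
    refine ((B.hasFDerivAt.comp x hJ).add
      (hsub.sub ((B.comp J).hasFDerivAt.comp x hsub))).congr_fderiv ?_
    ext v
    simp
  refine ⟨hΦ.toOpenPartialHomeomorph Φ hΦ' one_ne_zero,
    hΦ.mem_toOpenPartialHomeomorph_source hΦ' one_ne_zero, hΦx, hΦ,
    hΦx ▸ hΦ.to_localInverse hΦ' one_ne_zero, fun z => ?_, fun z => ?_⟩
  · simp [Φ, hJB]
  · have hz : star z - x = star (z - x) := by rw [star_sub, hx.star_eq]
    simp only [ContDiffAt.toOpenPartialHomeomorph_coe, Φ, hz, hfstar, hBstar, hJstar, star_add,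
      star_sub (z - x)]

theorem exists_retraction_map_star [CompleteSpace E] [FiniteDimensional 𝕜 F]
    (hf : ContDiffAt 𝕜 1 f x) (hfstar : ∀ z, f (star z) = star (f z)) (hx : IsSelfAdjoint x)
    (hfx : f x = 0) (hJ : HasFDerivAt f J x) (hJsurj : Function.Surjective J) :
    ∃ ρ : E → E, ContDiffAt 𝕜 1 ρ x ∧ ρ x = x ∧ (∀ᶠ z in 𝓝 x, f (ρ z) = 0) ∧
      (∀ᶠ z in 𝓝 x, f z = 0 → ρ z = z) ∧ ∀ᶠ z in 𝓝 x, ρ (star z) = star (ρ z) := by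
  have hJstar := map_star_of_hasFDerivAt hfstar hx hJ
  obtain ⟨B, hJB, hBstar⟩ := exists_rightInverse_map_star hJsurj hJstar
  obtain ⟨e, hxe, hex, hdiff, hdiff_symm, hJe, hestar⟩ :=
    exists_openPartialHomeomorph_map_eq hf hfstar hx hfx hJ hJsurj
  let pr : E →L[𝕜] E := .id 𝕜 E - B.comp J
  have hpr (w : E) : pr w = w - B (J w) := rfl
  have hpr_star (w : E) : pr (star w) = star (pr w) := by
    rw [hpr, hpr, hJstar, hBstar, star_sub]
  have hpr_ex : pr (e x) = 0 := by rw [hex, map_zero]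
  have hdiff_symm' : ContDiffAt 𝕜 1 e.symm (pr (e x)) := hpr_ex ▸ hdiff_symm
  let ρ : E → E := fun z => e.symm (pr (e z))
  have hρ : ContDiffAt 𝕜 1 ρ x := hdiff_symm'.comp x (pr.contDiff.contDiffAt.comp x hdiff)
  have hρx : ρ x = x := by simp only [ρ, hpr_ex, ← hex, e.left_inv hxe]
  have htarget : ∀ᶠ z in 𝓝 x, pr (e z) ∈ e.target := by
    refine (pr.continuous.continuousAt.comp hdiff.continuousAt).eventually
      (e.open_target.mem_nhds ?_)
    simpa only [Function.comp_apply, hpr_ex, ← hex] using e.map_source hxe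
  have hsource : ∀ᶠ z in 𝓝 x, star (ρ z) ∈ e.source := by
    refine hρ.continuousAt.star.eventually (e.open_source.mem_nhds ?_)
    simpa only [hρx, hx.star_eq] using hxe
  refine ⟨ρ, hρ, hρx, ?_, ?_, ?_⟩
  · filter_upwards [htarget] with z hz
    rw [← hJe, e.right_inv hz, hpr, map_sub, hJB, sub_self]
  · filter_upwards [e.open_source.mem_nhds hxe] with z hz hfz
    simp only [ρ, hpr, hJe, hfz, map_zero, sub_zero, e.left_inv hz]
  · filter_upwards [htarget, hsource] with z hz hz_star
    rw [← e.left_inv hz_star, hestar, e.right_inv hz, ← hpr_star, ← hestar]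

end StarEquivariant

theorem eventually_eq_zero_imp_of_eventually_isSelfAdjoint_imp {E F G : Type*}
    [NormedAddCommGroup E] [NormedSpace ℂ E] [StarAddMonoid E] [StarModule ℂ E]
    [NormedStarGroup E] [CompleteSpace E]
    [NormedAddCommGroup F] [NormedSpace ℂ F] [StarAddMonoid F] [StarModule ℂ F]
    [ContinuousStar F] [FiniteDimensional ℂ F]
    [NormedAddCommGroup G] [NormedSpace ℂ G] [CompleteSpace G]
    {f : E → F} {x : E} {J : E →L[ℂ] F} (hf : ContDiffAt ℂ 1 f x)
    (hfstar : ∀ z, f (star z) = star (f z)) (hx : IsSelfAdjoint x) (hfx : f x = 0)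
    (hJ : HasFDerivAt f J x) (hJsurj : Function.Surjective J) {h : E → G}
    (hh : ∀ᶠ z in 𝓝 x, DifferentiableAt ℂ h z)
    (h0 : ∀ᶠ z in 𝓝 x, IsSelfAdjoint z → f z = 0 → h z = 0) :
    ∀ᶠ z in 𝓝 x, f z = 0 → h z = 0 := by
  obtain ⟨ρ, hρ, hρx, hfρ, hρ_fix, hρ_star⟩ :=
    exists_retraction_map_star hf hfstar hx hfx hJ hJsurj
  have htendsto : Filter.Tendsto ρ (𝓝 x) (𝓝 x) := by
    simpa only [hρx] using hρ.continuousAt.tendsto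
  have hdiff : ∀ᶠ z in 𝓝 x, DifferentiableAt ℂ (h ∘ ρ) z := by
    filter_upwards [hρ.eventually (by simp), htendsto.eventually hh] with z hρz hhz
    exact hhz.comp z (hρz.differentiableAt one_ne_zero)
  have hreal : ∀ᶠ z in 𝓝 x, IsSelfAdjoint z → (h ∘ ρ) z = 0 := by
    filter_upwards [hfρ, hρ_star, htendsto.eventually h0] with z hfz hz_star h0z hz
    exact h0z (hz_star.symm.trans (congrArg ρ hz)) hfz
  filter_upwards [eventually_eq_zero_of_eventually_isSelfAdjoint_imp hx hdiff hreal, hρ_fix]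
    with z hz hz_fix hfz
  rw [← hz_fix hfz]
  exact hz

theorem aeval_star {σ R A : Type*} [CommSemiring R] [StarRing R] [TrivialStar R] [CommSemiring A]
    [StarRing A] [Algebra R A] [StarModule R A] (z : σ → A) (p : MvPolynomial σ R) :
    aeval (star z) p = star (aeval z p) := by
  induction p using MvPolynomial.induction_on with
  | C a => simp [← algebraMap_star_comm]
  | add p q hp hq => simp [hp, hq]
  | mul_X p n hp => simp [hp]

theorem hasFDerivAt_aeval {σ R 𝕜 : Type*} [Fintype σ] [CommSemiring R]
    [NontriviallyNormedField 𝕜] [Algebra R 𝕜] (p : MvPolynomial σ R) (x : σ → 𝕜) :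
    HasFDerivAt (fun z : σ → 𝕜 => aeval z p)
      (∑ i, aeval x (pderiv i p) • (ContinuousLinearMap.proj i : (σ → 𝕜) →L[𝕜] 𝕜)) x := by
  classical
  induction p using MvPolynomial.induction_on with
  | C a =>
    simp only [aeval_C]
    refine (hasFDerivAt_const (𝕜 := 𝕜) (algebraMap R 𝕜 a) x).congr_fderiv ?_
    ext v
    simp
  | add p q hp hq =>
    simp only [map_add]
    refine (hp.add hq).congr_fderiv ?_
    ext v
    simp [add_mul, Finset.sum_add_distrib]
  | mul_X p n hp =>
    have hX := (ContinuousLinearMap.proj (R := 𝕜) (φ := fun _ : σ => 𝕜) n).hasFDerivAt (x := x)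
    simp only [map_mul, aeval_X]
    refine (hp.mul hX).congr_fderiv ?_
    ext v
    simp [pderiv_X, Pi.single_apply, apply_ite, add_mul, Finset.sum_add_distrib, Finset.mul_sum,
      mul_assoc]

/-- The Jacobian matrix at `x` of the polynomial map with components `F`, with rows indexed by the
components; its full row rank expresses smoothness of the zero set of `F` at `x`. -/
noncomputable def jacobianMatrix {σ ι R A : Type*} [CommSemiring R] [CommSemiring A] [Algebra R A]
    (F : ι → MvPolynomial σ R) (x : σ → A) : Matrix ι σ A :=
  .of fun j i => aeval x (pderiv i (F j))

theorem hasFDerivAt_polynomialMap {σ ι R 𝕜 : Type*} [Fintype σ] [Finite ι] [CommSemiring R]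
    [NontriviallyNormedField 𝕜] [CompleteSpace 𝕜] [Algebra R 𝕜] (F : ι → MvPolynomial σ R)
    (x : σ → 𝕜) :
    HasFDerivAt (polynomialMap F) (jacobianMatrix F x).mulVecLin.toContinuousLinearMap x := by
  have := Fintype.ofFinite ι
  refine hasFDerivAt_pi'.2 fun j => (hasFDerivAt_aeval (F j) x).congr_fderiv ?_
  ext v
  simp [jacobianMatrix, Matrix.mulVec, dotProduct]

theorem mulVec_surjective_of_rank_eq_card {m n k : Type*} [Fintype m] [Fintype n] [Field k]
    {A : Matrix m n k} (hA : A.rank = Fintype.card m) : Function.Surjective A.mulVec := by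
  refine (LinearMap.range_eq_top (f := A.mulVecLin)).1 (Submodule.eq_top_of_finrank_eq ?_)
  rwa [Module.finrank_pi]

theorem contDiff_polynomialMap {σ ι R 𝕜 : Type*} [Fintype σ] [Fintype ι] [CommSemiring R]
    [NontriviallyNormedField 𝕜] [CompleteSpace 𝕜] [Algebra R 𝕜] (F : ι → MvPolynomial σ R)
    {n : WithTop ℕ∞} : ContDiff 𝕜 n (polynomialMap F : (σ → 𝕜) → ι → 𝕜) := by
  have hX (j : σ) : AnalyticOnNhd 𝕜 (fun z : σ → 𝕜 => z j) Set.univ :=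
    (ContinuousLinearMap.proj (R := 𝕜) (φ := fun _ : σ => 𝕜) j).analyticOnNhd _
  exact contDiff_pi.2 fun i => (AnalyticOnNhd.aeval_mvPolynomial hX (F i)).contDiff

theorem eventually_eval_eq_zero_of_rank_jacobianMatrix_eq_card {σ ι : Type*} [Fintype σ]
    [Fintype ι] {F : ι → MvPolynomial σ ℝ} {x : σ → ℂ} (hx : IsSelfAdjoint x)
    (hFx : polynomialMap F x = 0) (hrank : (jacobianMatrix F x).rank = Fintype.card ι)
    {P : MvPolynomial σ ℂ}
    (hP : ∀ᶠ z in 𝓝 x, IsSelfAdjoint z → polynomialMap F z = 0 → eval z P = 0) :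
    ∀ᶠ z in 𝓝 x, polynomialMap F z = 0 → eval z P = 0 := by
  have hstar (z : σ → ℂ) : polynomialMap F (star z) = star (polynomialMap F z) :=
    funext fun i => aeval_star z (F i)
  have hsurj : Function.Surjective (jacobianMatrix F x).mulVecLin.toContinuousLinearMap :=
    mulVec_surjective_of_rank_eq_card hrank
  have hdiff (z : σ → ℂ) : DifferentiableAt ℂ (fun z => eval z P) z :=
    (hasFDerivAt_aeval P z).differentiableAt
  exact eventually_eq_zero_imp_of_eventually_isSelfAdjoint_imp (f := polynomialMap F)
    (contDiff_polynomialMap F).contDiffAt hstar hx hFx (hasFDerivAt_polynomialMap F x) hsurj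
    (.of_forall hdiff) hP

theorem isPrime_vanishingIdeal {σ k : Type*} [Field k] {V : Set (σ → k)} (hne : V.Nonempty)
    (hirr : ∀ p q : MvPolynomial σ k, (∀ z ∈ V, eval z p = 0 ∨ eval z q = 0) →
      (∀ z ∈ V, eval z p = 0) ∨ ∀ z ∈ V, eval z q = 0) :
    (vanishingIdeal k V).IsPrime := by
  refine ⟨fun htop => ?_, fun {p q} hpq => ?_⟩
  · obtain ⟨x, hx⟩ := hne
    have h1 : (1 : MvPolynomial σ k) ∈ vanishingIdeal k V := htop ▸ Submodule.mem_top
    simpa using h1 x hx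
  · exact hirr p q fun z hz => mul_eq_zero.1 (by simpa using hpq z hz)

theorem zeroLocus_vanishingIdeal_setOf {σ k : Type*} [Field k] (S : Set (MvPolynomial σ k)) :
    zeroLocus k (vanishingIdeal k {z | ∀ p ∈ S, eval z p = 0}) =
      {z : σ → k | ∀ p ∈ S, eval z p = 0} := by
  refine Set.Subset.antisymm (fun z hz p hp => ?_) (zeroLocus_vanishingIdeal_le _)
  simpa using hz p fun w hw => by simpa using hw p hp

theorem isSelfAdjoint_iff_forall_im_eq_zero {σ : Type*} {z : σ → ℂ} :
    IsSelfAdjoint z ↔ ∀ i, (z i).im = 0 :=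
  funext_iff.trans (forall_congr' fun _ => Complex.conj_eq_iff_im)

theorem real_points_zariski_dense_of_smooth_point_general {σ ι : Type*} [Fintype σ] [Fintype ι]
    (S : Set (MvPolynomial σ ℂ)) (V : Set (σ → ℂ)) (hV : V = {z | ∀ p ∈ S, eval z p = 0})
    (hirr : ∀ T₁ T₂ : Set (MvPolynomial σ ℂ),
      V ⊆ {z | ∀ p ∈ T₁, eval z p = 0} ∪ {z | ∀ p ∈ T₂, eval z p = 0} →
      (V ⊆ {z | ∀ p ∈ T₁, eval z p = 0} ∨ V ⊆ {z | ∀ p ∈ T₂, eval z p = 0}))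
    (x₀ : σ → ℂ) (W : Set (σ → ℂ)) (hWopen : IsOpen W) (hx₀W : x₀ ∈ W)
    (F : ι → MvPolynomial σ ℝ) (hVF : V ∩ W = {z ∈ W | ∀ j, aeval z (F j) = 0})
    (hJac : (jacobianMatrix F x₀).rank = Fintype.card ι)
    (H : Set (σ → ℂ))
    (hH : ∃ O : Set (σ → ℂ), IsOpen O ∧ H = {z ∈ V | ∀ i, (z i).im = 0} ∩ O)
    (hx₀H : x₀ ∈ H) (P : MvPolynomial σ ℂ) (hP : ∀ z ∈ H, eval z P = 0) :
    ∀ z ∈ V, eval z P = 0 := by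
  obtain ⟨O, hO, rfl⟩ := hH
  obtain ⟨⟨hx₀V, hx₀R⟩, hx₀O⟩ := hx₀H
  have hW : ∀ᶠ z in 𝓝 x₀, z ∈ V ↔ polynomialMap F z = 0 := by
    filter_upwards [hWopen.mem_nhds hx₀W] with z hz
    simpa [hz, funext_iff, polynomialMap] using Set.ext_iff.1 hVF z
  have hreal : ∀ᶠ z in 𝓝 x₀, IsSelfAdjoint z → polynomialMap F z = 0 → eval z P = 0 := by
    filter_upwards [hW, hO.mem_nhds hx₀O] with z hzW hzO hzR hFz
    exact hP z ⟨⟨hzW.2 hFz, isSelfAdjoint_iff_forall_im_eq_zero.1 hzR⟩, hzO⟩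
  have hlocal := eventually_eval_eq_zero_of_rank_jacobianMatrix_eq_card
    (isSelfAdjoint_iff_forall_im_eq_zero.2 hx₀R) (hW.self_of_nhds.1 hx₀V) hJac hreal
  have hprime : (vanishingIdeal ℂ V).IsPrime := isPrime_vanishingIdeal ⟨x₀, hx₀V⟩ fun p q hpq => by
    simpa [Set.subset_def] using hirr {p} {q} (by simpa [Set.subset_def] using hpq)
  have hVI : zeroLocus ℂ (vanishingIdeal ℂ V) = V := hV ▸ zeroLocus_vanishingIdeal_setOf S
  have hPI : P ∈ vanishingIdeal ℂ V := by
    refine mem_of_eventually_mem_zeroLocus_imp_eval_eq_zero (hVI.symm ▸ hx₀V) ?_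
    filter_upwards [hW, hlocal] with z hzW hz hzV
    exact hz (hzW.1 (hVI ▸ hzV))
  simpa using hPI

/-- If an irreducible complex affine variety `V(ℂ) ⊆ ℂ^N`, cut out by real polynomials,
has a smooth real point `x₀`, then any Euclidean-open subset `H` of `V(ℝ) = V(ℂ) ∩ ℝ^N`
containing `x₀` is Zariski-dense in `V(ℝ)`: a real polynomial vanishing on `H` vanishes
on `V(ℝ)`. -/
theorem real_points_zariski_dense_of_smooth_point
    (N nd : ℕ) (hN : 1 ≤ N) (hnd : nd ≤ N)
    (S : Set (MvPolynomial (Fin N) ℝ))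
    (V : Set (Fin N → ℂ)) (hV : V = {z | ∀ p ∈ S, MvPolynomial.aeval z p = 0})
    (hne : V.Nonempty)
    (hirr : ∀ T₁ T₂ : Set (MvPolynomial (Fin N) ℂ),
      V ⊆ {z | ∀ p ∈ T₁, MvPolynomial.eval z p = 0} ∪
          {z | ∀ p ∈ T₂, MvPolynomial.eval z p = 0} →
      (V ⊆ {z | ∀ p ∈ T₁, MvPolynomial.eval z p = 0} ∨
       V ⊆ {z | ∀ p ∈ T₂, MvPolynomial.eval z p = 0}))
    (x₀ : Fin N → ℂ) (hx₀V : x₀ ∈ V) (hx₀R : ∀ i, (x₀ i).im = 0)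
    -- `x₀` is a smooth point of `V(ℂ)`:
    (W : Set (Fin N → ℂ)) (hWopen : IsOpen W) (hx₀W : x₀ ∈ W)
    (F : Fin (N - nd) → MvPolynomial (Fin N) ℝ)
    (hVF : V ∩ W = {z ∈ W | ∀ j, MvPolynomial.aeval z (F j) = 0})
    (hJac : (Matrix.of fun (j : Fin (N - nd)) (i : Fin N) =>
        MvPolynomial.aeval x₀ (MvPolynomial.pderiv i (F j))).rank = N - nd)
    -- `H` is an open subset of `V(ℝ)` containing `x₀`:
    (H : Set (Fin N → ℂ))
    (hH : ∃ O : Set (Fin N → ℂ), IsOpen O ∧ H = {z ∈ V | ∀ i, (z i).im = 0} ∩ O)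
    (hx₀H : x₀ ∈ H)
    (P : MvPolynomial (Fin N) ℝ) (hP : ∀ z ∈ H, MvPolynomial.aeval z P = 0) :
    ∀ z ∈ V, (∀ i, (z i).im = 0) → MvPolynomial.aeval z P = 0 := by
  have heval (z : Fin N → ℂ) (p : MvPolynomial (Fin N) ℝ) :
      eval z (map (algebraMap ℝ ℂ) p) = aeval z p := by rw [eval_map, aeval_def]
  intro z hz _
  rw [← heval]
  refine real_points_zariski_dense_of_smooth_point_general (map (algebraMap ℝ ℂ) '' S) V ?_ hirr x₀
    W hWopen hx₀W F hVF (hJac.trans (Fintype.card_fin _).symm) H hH hx₀H _ ?_ z hz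
  · simpa only [Set.forall_mem_image, heval] using hV
  · simpa only [heval] using hP
end

section
/- Let n ≥ 1 and let U ⊆ ℂⁿ be an open, preconnected set such that U ∩ ℝⁿ is nonempty. Let f: ℂⁿ → ℂ be analytic at every point of U (holomorphic on U). If f vanishes at every point of U ∩ ℝⁿ, then f vanishes identically on U. -/
/-!
The one-variable identity principle is applied to one coordinate at a time. On a polydisc about a
real point of `U`, fix all coordinates but one: the resulting slice vanishes at real points
accumulating at the centre, hence on the whole disc. Freeing the coordinates successively from the
constraint of being real shows that `f` vanishes on the polydisc, and so on the preconnected set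
`U`. Any sets accumulating at the coordinates of the centre can play the role of the real line.
-/

open Filter Function Metric Set Topology

section ProductDomain

variable {𝕜 ι E : Type*} [NontriviallyNormedField 𝕜] [Fintype ι]

lemma analyticAt_update [DecidableEq ι] {F : ι → Type*} [∀ i, NormedAddCommGroup (F i)]
    [∀ i, NormedSpace 𝕜 (F i)] (z : ∀ i, F i) (j : ι) (w : F j) :
    AnalyticAt 𝕜 (update z j) w := by
  rw [analyticAt_pi_iff]
  intro i
  obtain rfl | hij := eq_or_ne i j
  · simp only [update_self]
    exact analyticAt_id
  · simpa only [update_of_ne hij] using analyticAt_const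

variable [NormedAddCommGroup E] [NormedSpace 𝕜 E] {f : (ι → 𝕜) → E} {D S : ι → Set 𝕜} {a : ι → 𝕜}

lemma eq_zero_of_forall_update_eq_zero_of_accPt [DecidableEq ι]
    (hf : AnalyticOnNhd 𝕜 f (univ.pi D)) {j : ι} (hD : IsPreconnected (D j)) {c : 𝕜} (hc : c ∈ D j)
    {T : Set 𝕜} (hT : AccPt c (𝓟 T)) {z : ι → 𝕜} (hz : z ∈ univ.pi D)
    (hvan : ∀ w ∈ T, f (update z j w) = 0) : f z = 0 := by
  have slice_analytic : AnalyticOnNhd 𝕜 (f ∘ update z j) (D j) := fun w hw ↦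
    (hf _ ((update_mem_pi_iff_of_mem hz).2 fun _ ↦ hw)).comp (analyticAt_update z j w)
  have slice_frequently_zero : ∃ᶠ w in 𝓝[≠] c, (f ∘ update z j) w = 0 :=
    (accPt_iff_frequently_nhdsNE.1 hT).mono hvan
  simpa using slice_analytic.eqOn_zero_of_preconnected_of_frequently_eq_zero hD hc
    slice_frequently_zero (hz j (mem_univ j))

theorem eqOn_zero_pi_of_eqOn_zero_pi_of_accPt (hf : AnalyticOnNhd 𝕜 f (univ.pi D))
    (hD : ∀ i, IsPreconnected (D i)) (ha : ∀ i, a i ∈ D i) (hSD : ∀ i, S i ⊆ D i)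
    (hS : ∀ i, AccPt (a i) (𝓟 (S i))) (hvan : EqOn f 0 (univ.pi S)) : EqOn f 0 (univ.pi D) := by
  classical
  suffices h : ∀ s : Finset ι, ∀ z ∈ univ.pi D, (∀ i ∉ s, z i ∈ S i) → f z = 0 from
    fun z hz ↦ h Finset.univ z hz (by simp)
  intro s
  induction s using Finset.induction_on with
  | empty => exact fun z _ hzS ↦ hvan fun i _ ↦ hzS i (Finset.notMem_empty i)
  | insert j s _ ih =>
    intro z hz hzS
    refine eq_zero_of_forall_update_eq_zero_of_accPt hf (hD j) (ha j) (hS j) hz fun w hw ↦ ?_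
    refine ih _ ((update_mem_pi_iff_of_mem hz).2 fun _ ↦ hSD j hw) fun i hi ↦ ?_
    obtain rfl | hij := eq_or_ne i j
    · simpa only [update_self] using hw
    · simpa only [update_of_ne hij] using hzS i (by simp [hij, hi])

end ProductDomain

section OpenDomain

variable {𝕜 ι E : Type*} [RCLike 𝕜] [Fintype ι] [NormedAddCommGroup E] [NormedSpace 𝕜 E]
  {f : (ι → 𝕜) → E} {S : ι → Set 𝕜} {a : ι → 𝕜}

theorem eventuallyEq_zero_of_eventually_eq_zero_nhdsWithin_pi
    (hf : ∀ᶠ z in 𝓝 a, AnalyticAt 𝕜 f z) (hS : ∀ i, AccPt (a i) (𝓟 (S i)))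
    (hvan : ∀ᶠ z in 𝓝[univ.pi S] a, f z = 0) : f =ᶠ[𝓝 a] 0 := by
  obtain ⟨r, hr, hball⟩ :=
    eventually_nhds_iff_ball.1 (hf.and (eventually_nhdsWithin_iff.1 hvan))
  rw [ball_pi a hr] at hball
  have eqOn_polydisc : EqOn f 0 (univ.pi fun i ↦ ball (a i) r) :=
    eqOn_zero_pi_of_eqOn_zero_pi_of_accPt (fun z hz ↦ (hball z hz).1)
      (fun _ ↦ isPreconnected_ball) (fun _ ↦ mem_ball_self hr) (fun _ ↦ inter_subset_left)
      (fun i ↦ (hS i).nhds_inter (ball_mem_nhds (a i) hr))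
      fun z hz ↦ (hball z fun i hi ↦ (hz i hi).1).2 fun i hi ↦ (hz i hi).2
  rw [← ball_pi a hr] at eqOn_polydisc
  exact eqOn_polydisc.eventuallyEq_of_mem (ball_mem_nhds a hr)

theorem holomorphic_eq_zero_of_eq_zero_on_reals_general {U : Set (ι → 𝕜)} (hUopen : IsOpen U)
    (hUconn : IsPreconnected U) (ha : a ∈ U) (hS : ∀ i, AccPt (a i) (𝓟 (S i)))
    (hf : AnalyticOnNhd 𝕜 f U) (hvan : ∀ᶠ z in 𝓝[univ.pi S] a, f z = 0) : EqOn f 0 U :=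
  hf.eqOn_zero_of_preconnected_of_eventuallyEq_zero hUconn ha <|
    eventuallyEq_zero_of_eventually_eq_zero_nhdsWithin_pi
      (eventually_of_mem (hUopen.mem_nhds ha) hf) hS hvan

end OpenDomain

lemma preperfect_setOf_im_eq_zero : Preperfect {z : ℂ | z.im = 0} :=
  (convex_hyperplane Complex.imLm.isLinear 0).isPreconnected.preperfect_of_nontrivial
    ⟨0, Complex.zero_im, 1, Complex.one_im, zero_ne_one⟩

/-- A function of `n` complex variables, holomorphic on an open preconnected set `U ⊆ ℂⁿ`
meeting `ℝⁿ`, which vanishes at every real point of `U`, vanishes identically on `U`. -/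
theorem holomorphic_eq_zero_of_eq_zero_on_reals
    (n : ℕ) (hn : 1 ≤ n) (U : Set (Fin n → ℂ))
    (hUopen : IsOpen U) (hUconn : IsPreconnected U)
    (hUR : ∃ z ∈ U, ∀ i, (z i).im = 0)
    (f : (Fin n → ℂ) → ℂ) (hf : ∀ z ∈ U, AnalyticAt ℂ f z)
    (hvan : ∀ z ∈ U, (∀ i, (z i).im = 0) → f z = 0) :
    ∀ z ∈ U, f z = 0 := by
  obtain ⟨a, haU, ha⟩ := hUR
  refine holomorphic_eq_zero_of_eq_zero_on_reals_general hUopen hUconn haU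
    (fun i ↦ preperfect_setOf_im_eq_zero (a i) (ha i)) hf ?_
  filter_upwards [self_mem_nhdsWithin, mem_nhdsWithin_of_mem_nhds (hUopen.mem_nhds haU)]
    with z hz hzU using hvan z hzU fun i ↦ hz i (mem_univ i)
end
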